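/- arXiv:0906.2621 — 6 statements merged into one kernel-verified Lean document; each statement's English description precedes it below -/
import Mathlib

section
/- Let G be a group generated by three elements x, y, z satisfying x² = y³, y³ = z⁷ and z⁷ = x·y·z. Then G is perfect, i.e. G equals its commutator subgroup [G, G]. -/
theorem bergman_comm_aux {A : Type*} [CommGroup A] (a b c : A)
    (h1 : a ^ 2 = b ^ 3) (h2 : b ^ 3 = c ^ 7) (h3 : c ^ 7 = a * b * c) :
    a = 1 ∧ b = 1 ∧ c = 1 := by
  have ha : a = b * c := by
    have h : a * a = a * (b * c) := by rw [← pow_two, h1, h2, h3, mul_assoc]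
    exact mul_left_cancel h
  subst ha
  have hb : b = c ^ 2 := by
    rw [mul_pow, pow_succ b 2] at h1
    exact (mul_left_cancel h1).symm
  subst hb
  have hc : c = 1 := by
    rw [← pow_mul, pow_succ c 6] at h2
    exact left_eq_mul.mp h2
  subst hc
  simp

/-- If a group `G` is generated by `x, y, z` with `x² = y³ = z⁷ = x*y*z`,
then `G` is perfect: `G = [G, G]`. -/
theorem bergman_perfect {G : Type*} [Group G] (x y z : G)
    (hgen : Subgroup.closure ({x, y, z} : Set G) = ⊤)
    (h1 : x ^ 2 = y ^ 3) (h2 : y ^ 3 = z ^ 7) (h3 : z ^ 7 = x * y * z) :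
    commutator G = ⊤ := by
  have k1 := congrArg (Abelianization.of (G := G)) h1
  have k2 := congrArg (Abelianization.of (G := G)) h2
  have k3 := congrArg (Abelianization.of (G := G)) h3
  simp only [map_pow, map_mul] at k1 k2 k3
  obtain ⟨ha, hb, hc⟩ := bergman_comm_aux _ _ _ k1 k2 k3
  have key : ∀ g : G, Abelianization.of g = 1 → g ∈ commutator G := fun g hg =>
    (QuotientGroup.eq_one_iff g).mp hg
  rw [eq_top_iff, ← hgen, Subgroup.closure_le]
  rintro g (rfl | rfl | rfl)
  · exact key _ ha
  · exact key _ hb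
  · exact key _ hc
end

section
/- Let G be a group generated by three elements x, y, z satisfying x² = y³, y³ = z⁷ and z⁷ = x·y·z. If H is a subgroup of G which contains the center Z(G) and is isolated (i.e. for every g ∈ G and every positive integer n, gⁿ ∈ H implies g ∈ H), then H = G. Equivalently, G is the isolator of its center: G = I(Z(G)). -/
/-- If a group `G` is generated by `x, y, z` with `x² = y³ = z⁷ = x*y*z`,
then any isolated subgroup containing the center is all of `G`;
that is, `G` is the isolator of its center. -/
theorem bergman_isolator_of_center {G : Type*} [Group G] (x y z : G)
    (hgen : Subgroup.closure ({x, y, z} : Set G) = ⊤)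
    (h1 : x ^ 2 = y ^ 3) (h2 : y ^ 3 = z ^ 7) (h3 : z ^ 7 = x * y * z)
    (H : Subgroup G) (hZ : Subgroup.center G ≤ H)
    (hiso : ∀ (g : G) (n : ℕ), 0 < n → g ^ n ∈ H → g ∈ H) :
    H = ⊤ := by
  have hc : x ^ 2 ∈ Subgroup.center G := by
    have hle : Subgroup.closure ({x, y, z} : Set G) ≤ Subgroup.centralizer {x ^ 2} := by
      rw [Subgroup.closure_le]
      intro g hg
      rw [SetLike.mem_coe, Subgroup.mem_centralizer_singleton_iff]
      rcases hg with rfl | rfl | rfl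
      · exact ((Commute.refl _).pow_right 2).eq
      · rw [h1]
        exact ((Commute.refl _).pow_right 3).eq
      · rw [h1, h2]
        exact ((Commute.refl _).pow_right 7).eq
    rw [hgen] at hle
    rw [Subgroup.mem_center_iff]
    intro g
    have := hle (Subgroup.mem_top g)
    rw [Subgroup.mem_centralizer_singleton_iff] at this
    exact this
  have hH := hZ hc
  rw [eq_top_iff, ← hgen, Subgroup.closure_le]
  intro g hg
  rcases hg with rfl | rfl | rfl
  · exact hiso _ 2 (by norm_num) hH
  · exact hiso _ 3 (by norm_num) (h1 ▸ hH)
  · exact hiso _ 7 (by norm_num) (h2 ▸ h1 ▸ hH)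
end

section
/- Let G be a group generated by three elements x, y, z satisfying x² = y³, y³ = z⁷ and z⁷ = x·y·z, and let N be a proper normal subgroup of G which is isolated (for every g ∈ G and every positive integer n, gⁿ ∈ N implies g ∈ N). Then the center Z(G) is not contained in N, the quotient group G/N has non-trivial center, and G/N is non-abelian. -/
/-- If a group `G` is generated by `x, y, z` with `x² = y³ = z⁷ = x*y*z`,
and `N` is a proper isolated normal subgroup of `G`, then the center of `G`
is not contained in `N`, the quotient `G ⧸ N` has non-trivial center, and
`G ⧸ N` is non-abelian. -/
theorem bergman_quotient_properties {G : Type*} [Group G] (x y z : G)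
    (hgen : Subgroup.closure ({x, y, z} : Set G) = ⊤)
    (h1 : x ^ 2 = y ^ 3) (h2 : y ^ 3 = z ^ 7) (h3 : z ^ 7 = x * y * z)
    (N : Subgroup G) [N.Normal] (hN : N ≠ ⊤)
    (hiso : ∀ (g : G) (n : ℕ), 0 < n → g ^ n ∈ N → g ∈ N) :
    ¬ Subgroup.center G ≤ N ∧ Subgroup.center (G ⧸ N) ≠ ⊥ ∧
      ∃ a b : G ⧸ N, a * b ≠ b * a := by
  have key : x ^ 2 ∉ N := by
    intro hx
    apply hN
    rw [eq_top_iff, ← hgen, Subgroup.closure_le]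
    rintro g (rfl | rfl | rfl)
    · exact hiso _ 2 (by norm_num) hx
    · exact hiso _ 3 (by norm_num) (h1 ▸ hx)
    · exact hiso _ 7 (by norm_num) (h2 ▸ h1 ▸ hx)
  have hc : x ^ 2 ∈ Subgroup.center G := by
    have hle : Subgroup.closure ({x, y, z} : Set G) ≤ Subgroup.centralizer {x ^ 2} := by
      rw [Subgroup.closure_le]
      rintro g (rfl | rfl | rfl) <;> rw [SetLike.mem_coe, Subgroup.mem_centralizer_singleton_iff]
      · exact ((Commute.refl g).pow_right 2).eq
      · rw [h1]; exact ((Commute.refl g).pow_right 3).eq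
      · rw [h1, h2]; exact ((Commute.refl g).pow_right 7).eq
    rw [Subgroup.mem_center_iff]
    intro g
    have hg : g ∈ Subgroup.centralizer {x ^ 2} := hle (hgen ▸ Subgroup.mem_top g)
    rwa [Subgroup.mem_centralizer_singleton_iff] at hg
  refine ⟨fun h => key (h hc), ?_, ?_⟩
  · intro hb
    apply key
    rw [← QuotientGroup.eq_one_iff, ← Subgroup.mem_bot, ← hb, Subgroup.mem_center_iff]
    intro q
    obtain ⟨g, rfl⟩ := QuotientGroup.mk_surjective q
    exact congrArg (QuotientGroup.mk (s := N)) (Subgroup.mem_center_iff.mp hc g)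
  · by_contra! hab
    apply key
    rw [← QuotientGroup.eq_one_iff]
    obtain ⟨X, hX⟩ : ∃ X : G ⧸ N, X = (x : G ⧸ N) := ⟨_, rfl⟩
    obtain ⟨Y, hY⟩ : ∃ X : G ⧸ N, X = (y : G ⧸ N) := ⟨_, rfl⟩
    obtain ⟨Z, hZ⟩ : ∃ X : G ⧸ N, X = (z : G ⧸ N) := ⟨_, rfl⟩
    have e1 : X ^ 2 = Y ^ 3 := by
      subst hX hY; exact congrArg (QuotientGroup.mk (s := N)) h1
    have e2 : X ^ 2 = Z ^ 7 := by
      subst hX hZ; exact congrArg (QuotientGroup.mk (s := N)) (h1.trans h2)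
    have e3 : X ^ 2 = X * Y * Z := by
      subst hX hY hZ; exact congrArg (QuotientGroup.mk (s := N)) (h1.trans (h2.trans h3))
    have hgoal : X ^ 2 = 1 := by
      have a : (X ^ 2) ^ 42 = (X ^ 2) ^ 41 := by
        calc (X ^ 2) ^ 42 = (X * Y * Z) ^ 42 := by rw [e3]
          _ = X ^ 42 * Y ^ 42 * Z ^ 42 := by
            rw [Commute.mul_pow (hab _ _), Commute.mul_pow (hab _ _)]
          _ = (X ^ 2) ^ 21 * (Y ^ 3) ^ 14 * (Z ^ 7) ^ 6 := by
            simp only [← pow_mul]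
          _ = (X ^ 2) ^ 41 := by rw [← e1, ← e2, ← pow_add, ← pow_add]
      rw [pow_succ _ 41] at a
      exact mul_eq_left.mp a
    subst hX
    exact hgoal
end

section
/- For every real number ξ, the set of real numbers η for which there exists an order-preserving additive group isomorphism between the ordered subgroups ℤ + ℤξ and ℤ + ℤη of (ℝ, +, ≤) is countable. -/
/-- An isomorphism's preimages of `1` and `η` determine the rational cut of `η`. -/
theorem D_cut_aux (ξ η : ℝ)
    (e : (AddSubgroup.closure ({1, ξ} : Set ℝ)) ≃+ (AddSubgroup.closure ({1, η} : Set ℝ)))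
    (he : ∀ a b, a ≤ b ↔ e a ≤ e b) (a b : AddSubgroup.closure ({1, ξ} : Set ℝ))
    (ha : ((e a : AddSubgroup.closure ({1, η} : Set ℝ)) : ℝ) = 1)
    (hb : ((e b : AddSubgroup.closure ({1, η} : Set ℝ)) : ℝ) = η) (m n : ℤ) :
    m • a ≤ n • b ↔ (m : ℝ) ≤ n * η := by
  rw [he, map_zsmul, map_zsmul, ← Subtype.coe_le_coe, AddSubgroup.coe_zsmul,
    AddSubgroup.coe_zsmul, ha, hb]
  simp

/-- For every real `ξ`, the set of reals `η` such that the ordered subgroups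
`ℤ + ℤξ` and `ℤ + ℤη` of `ℝ` are order-isomorphic as additive groups is
countable. -/
theorem countable_order_isomorphic_D (ξ : ℝ) :
    Set.Countable {η : ℝ |
      ∃ e : (AddSubgroup.closure ({1, ξ} : Set ℝ)) ≃+
            (AddSubgroup.closure ({1, η} : Set ℝ)),
        ∀ a b, a ≤ b ↔ e a ≤ e b} := by
  have hG : Countable (AddSubgroup.closure ({1, ξ} : Set ℝ)) := by
    have : Function.Surjective (fun p : ℤ × ℤ =>
        (⟨p.1 • (1:ℝ) + p.2 • ξ, AddSubgroup.mem_closure_pair.2 ⟨p.1, p.2, rfl⟩⟩ :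
          AddSubgroup.closure ({1, ξ} : Set ℝ))) := by
      rintro ⟨x, hx⟩
      obtain ⟨m, n, h⟩ := AddSubgroup.mem_closure_pair.1 hx
      exact ⟨(m, n), Subtype.ext h⟩
    exact this.countable
  have key : ∀ η : {η : ℝ | ∃ e : (AddSubgroup.closure ({1, ξ} : Set ℝ)) ≃+
            (AddSubgroup.closure ({1, η} : Set ℝ)), ∀ a b, a ≤ b ↔ e a ≤ e b},
      ∃ p : (AddSubgroup.closure ({1, ξ} : Set ℝ)) × (AddSubgroup.closure ({1, ξ} : Set ℝ)),
        ∀ m n : ℤ, m • p.1 ≤ n • p.2 ↔ (m : ℝ) ≤ n * η.1 := by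
    rintro ⟨η, e, he⟩
    refine ⟨(e.symm ⟨1, AddSubgroup.subset_closure (by simp)⟩,
      e.symm ⟨η, AddSubgroup.subset_closure (by simp)⟩), ?_⟩
    exact D_cut_aux ξ η e he _ _ (by simp) (by simp)
  choose f hf using key
  have lt_aux : ∀ x y, f x = f y → ¬ x.1 < y.1 := by
    intro x y hxy hlt
    obtain ⟨q, h1, h2⟩ := exists_rat_btwn hlt
    have hx := hf x q.num q.den
    have hy := hf y q.num q.den
    rw [hxy] at hx
    have hd : (0:ℝ) < q.den := by exact_mod_cast q.pos
    rw [Rat.cast_def] at h1 h2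
    rw [lt_div_iff₀ hd] at h1
    rw [div_lt_iff₀ hd] at h2
    have h3 := hx.1 (hy.2 (by push_cast; linarith))
    push_cast at h3
    linarith
  have hinj : Function.Injective f := fun x y h =>
    Subtype.ext (le_antisymm (not_lt.1 (lt_aux y x h.symm)) (not_lt.1 (lt_aux x y h)))
  exact Set.countable_coe_iff.1 hinj.countable
end

section
/- There exists an uncountable set S of real numbers such that for all distinct ξ, η ∈ S, there is no order-preserving additive group isomorphism between the ordered subgroups ℤ + ℤξ and ℤ + ℤη of (ℝ, +, ≤). -/
def IsoD (ξ η : ℝ) : Prop :=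
  ∃ e : (AddSubgroup.closure ({1, ξ} : Set ℝ)) ≃+
        (AddSubgroup.closure ({1, η} : Set ℝ)),
    ∀ a b, a ≤ b ↔ e a ≤ e b

def isoSetoid : Setoid ℝ where
  r := IsoD
  iseqv :=
    { refl := fun _ => ⟨AddEquiv.refl _, fun _ _ => Iff.rfl⟩
      symm := by
        rintro x y ⟨e, he⟩
        exact ⟨e.symm, fun a b => by rw [he]; simp⟩
      trans := by
        rintro x y z ⟨e, he⟩ ⟨f, hf⟩
        exact ⟨e.trans f, fun a b => by rw [he, hf]; rfl⟩ }

theorem countable_D (η : ℝ) :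
    ((AddSubgroup.closure ({1, η} : Set ℝ) : AddSubgroup ℝ) : Set ℝ).Countable := by
  refine (Set.countable_range (fun p : ℤ × ℤ => (p.1 : ℝ) + p.2 * η)).mono ?_
  intro x hx
  obtain ⟨m, n, h⟩ := AddSubgroup.mem_closure_pair.1 hx
  exact ⟨(m, n), by simpa using h⟩

theorem IsoD.eq_div {ξ η : ℝ} (h : IsoD ξ η) :
    ∃ a ∈ AddSubgroup.closure ({1, η} : Set ℝ),
      ∃ b ∈ AddSubgroup.closure ({1, η} : Set ℝ), b / a = ξ := by
  obtain ⟨e, he⟩ := h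
  have hlt : ∀ a b, a < b ↔ e a < e b := fun a b => by
    rw [← not_le, ← not_le, he]
  let o : AddSubgroup.closure ({1, ξ} : Set ℝ) :=
    ⟨1, AddSubgroup.subset_closure (by simp)⟩
  let x : AddSubgroup.closure ({1, ξ} : Set ℝ) :=
    ⟨ξ, AddSubgroup.subset_closure (by simp)⟩
  refine ⟨e o, (e o).2, e x, (e x).2, ?_⟩
  have ha : (0 : ℝ) < e o := by
    have h0 : (0 : AddSubgroup.closure ({1, ξ} : Set ℝ)) < o :=
      Subtype.coe_lt_coe.1 (by simp [o])
    have := (hlt _ _).1 h0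
    rw [map_zero] at this
    exact this
  have key1 : ∀ p q : ℤ, q * ξ < p ↔ q * (e x : ℝ) < p * (e o : ℝ) := by
    intro p q
    have := hlt (q • x) (p • o)
    rw [map_zsmul, map_zsmul, ← Subtype.coe_lt_coe, ← Subtype.coe_lt_coe] at this
    simpa [x, o] using this
  have key : ∀ r : ℚ, ξ < r ↔ (e x : ℝ) / e o < r := by
    intro r
    have hd : (0 : ℝ) < r.den := by exact_mod_cast r.den_pos
    have := key1 r.num r.den
    rw [div_lt_iff₀ ha, Rat.cast_def, lt_div_iff₀ hd, div_mul_eq_mul_div, lt_div_iff₀ hd,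
      mul_comm ξ, mul_comm (e x : ℝ)]
    simpa using this
  apply le_antisymm
  · by_contra! hc
    obtain ⟨r, h1, h2⟩ := exists_rat_btwn hc
    exact lt_asymm h2 ((key r).1 h1)
  · by_contra! hc
    obtain ⟨r, h1, h2⟩ := exists_rat_btwn hc
    exact lt_asymm h2 ((key r).2 h1)

/-- There is an uncountable set `S` of reals such that for distinct
`ξ, η ∈ S` the ordered subgroups `ℤ + ℤξ` and `ℤ + ℤη` of `ℝ` are not
order-isomorphic as additive groups. -/
theorem uncountable_pairwise_nonisomorphic_D :
    ∃ S : Set ℝ, ¬ S.Countable ∧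
      ∀ ξ ∈ S, ∀ η ∈ S, ξ ≠ η →
        ¬ ∃ e : (AddSubgroup.closure ({1, ξ} : Set ℝ)) ≃+
                (AddSubgroup.closure ({1, η} : Set ℝ)),
            ∀ a b, a ≤ b ↔ e a ≤ e b := by
  refine ⟨Set.range (fun q : Quotient isoSetoid => q.out), ?_, ?_⟩
  · intro hS
    have hc : (⋃ η ∈ Set.range (fun q : Quotient isoSetoid => q.out),
        {ξ : ℝ | IsoD ξ η}).Countable := by
      refine hS.biUnion fun η _ => ?_
      refine ((countable_D η).image2 (countable_D η) (fun a b => b / a)).mono ?_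
      intro ξ hξ
      obtain ⟨a, ha, b, hb, h⟩ := IsoD.eq_div hξ
      exact ⟨a, ha, b, hb, h⟩
    refine Cardinal.not_countable_real (hc.mono ?_)
    intro ξ _
    refine Set.mem_biUnion (Set.mem_range_self (Quotient.mk isoSetoid ξ)) ?_
    exact isoSetoid.symm (Quotient.mk_out (s := isoSetoid) ξ)
  · rintro _ ⟨p, rfl⟩ _ ⟨q, rfl⟩ hne h
    apply hne
    have : p = q := Quotient.out_equiv_out.1 h
    rw [this]
end

section
/- There is no countable right-ordered group U such that every countable right-ordered group admits an order-embedding into U. In other words, there is no universal countable right-ordered group. -/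
theorem key_embed
    (U : Type) [Group U] [LinearOrder U]
    (h : ∀ (G : Type) [Group G] [LinearOrder G],
        (∀ a b c : G, a ≤ b → a * c ≤ b * c) → Countable G →
        ∃ f : G →* U, Function.Injective f ∧ StrictMono f) (x : ℝ) :
    ∃ p : U × U, ∀ a b : ℤ, (a * x < b → p.2 ^ a < p.1 ^ b) ∧ (b < a * x → p.1 ^ b < p.2 ^ a) := by
  let φ : ℤ × ℤ →+ ℝ := (zmultiplesHom ℝ 1).coprod (zmultiplesHom ℝ x)
  let S : AddSubgroup ℝ := φ.range
  have hc : Countable S := (Set.countable_range φ).to_subtype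
  obtain ⟨f, -, hf⟩ := h (Multiplicative S)
    (fun a b c hab => mul_le_mul_left hab c) hc
  let e1 : S := ⟨1, (1, 0), by simp [φ]⟩
  let e2 : S := ⟨x, (0, 1), by simp [φ]⟩
  refine ⟨(f (Multiplicative.ofAdd e1), f (Multiplicative.ofAdd e2)), fun a b => ⟨fun hab => ?_, fun hab => ?_⟩⟩
  · simp only [← map_zpow, ← ofAdd_zsmul]
    apply hf
    rw [Multiplicative.ofAdd_lt, ← Subtype.coe_lt_coe]
    simpa [e1, e2] using hab
  · simp only [← map_zpow, ← ofAdd_zsmul]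
    apply hf
    rw [Multiplicative.ofAdd_lt, ← Subtype.coe_lt_coe]
    simpa [e1, e2] using hab

/-- There is no universal countable right-ordered group: no countable
right-ordered group `U` admits an order-embedding of every countable
right-ordered group. -/
theorem no_universal_countable_right_ordered_group
    (U : Type) [Group U] [LinearOrder U]
    (hU : ∀ a b c : U, a ≤ b → a * c ≤ b * c) (hUc : Countable U) :
    ¬ (∀ (G : Type) [Group G] [LinearOrder G],
        (∀ a b c : G, a ≤ b → a * c ≤ b * c) → Countable G →
        ∃ f : G →* U, Function.Injective f ∧ StrictMono f) := by
  intro h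
  choose p hp using key_embed U h
  have key : ∀ x y : ℝ, x < y → p x ≠ p y := by
    intro x y hxy he
    obtain ⟨q, hq1, hq2⟩ := exists_rat_btwn hxy
    have hd : (0 : ℝ) < q.den := by exact_mod_cast q.den_pos
    have hq : (q : ℝ) = q.num / q.den := Rat.cast_def q
    rw [hq, lt_div_iff₀ hd] at hq1
    rw [hq, div_lt_iff₀ hd] at hq2
    have h1 := (hp x q.den q.num).1 (by push_cast; linarith)
    have h2 := (hp y q.den q.num).2 (by push_cast; linarith)
    rw [he] at h1
    exact lt_asymm h1 h2
  have hinj : Function.Injective p := by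
    intro x y he
    by_contra hne
    rcases lt_or_gt_of_ne hne with hl | hl
    · exact key x y hl he
    · exact key y x hl he.symm
  have : Countable ℝ := hinj.countable
  exact not_countable (α := ℝ) this
end
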